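/- Let p ∈ (0,1/2], r ∈ ℕ with r ≥ 1, and δ > 0. Suppose f : {0,1}^n → {−1,0,1} satisfies I_S(f^{≤r}) ≤ δ for every S ⊆ [n] with |S| ≤ r. Then 𝔼_{μ_p}[(f^{≤r})²] ≤ 5^r·δ^{1/3}·𝔼_{μ_p}[f²]. -/

import Mathlib

open Finset

namespace GlobalHC

variable {n : ℕ}

/-- Expectation with respect to the `p`-biased measure on `{0,1}^n`. -/
noncomputable def Ep (p : ℝ) (f : (Fin n → Bool) → ℝ) : ℝ :=
  ∑ x : Fin n → Bool, (∏ i, if x i then p else 1 - p) * f x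

/-- The `r`-norm with respect to the `p`-biased measure. -/
noncomputable def pnorm (p r : ℝ) (f : (Fin n → Bool) → ℝ) : ℝ :=
  (Ep p fun x => |f x| ^ r) ^ (1 / r)

/-- The `p`-biased character `χ_S`. -/
noncomputable def chi (p : ℝ) (S : Finset (Fin n)) (x : Fin n → Bool) : ℝ :=
  ∏ i ∈ S, ((if x i then (1 : ℝ) else 0) - p) / Real.sqrt (p * (1 - p))

/-- The `p`-biased Fourier coefficient `f̂(S)`. -/
noncomputable def coeff (p : ℝ) (f : (Fin n → Bool) → ℝ) (S : Finset (Fin n)) : ℝ :=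
  Ep p fun x => f x * chi p S x

/-- The derivative `D_S f = Σ_{T ⊇ S} f̂(T) χ_{T∖S}`. -/
noncomputable def derivS (p : ℝ) (S : Finset (Fin n)) (f : (Fin n → Bool) → ℝ) :
    (Fin n → Bool) → ℝ :=
  fun x => ∑ T ∈ Finset.univ.filter (fun T => S ⊆ T), coeff p f T * chi p (T \ S) x

/-- The generalised influence `I_S(f) = σ^{-2|S|} Σ_{T ⊇ S} f̂(T)²`. -/
noncomputable def genInf (p : ℝ) (S : Finset (Fin n)) (f : (Fin n → Bool) → ℝ) : ℝ :=
  (∑ T ∈ Finset.univ.filter (fun T => S ⊆ T), coeff p f T ^ 2) / (p * (1 - p)) ^ S.card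

/-- The noise operator `T_ρ f = Σ_S ρ^{|S|} f̂(S) χ_S`. -/
noncomputable def noise (p ρ : ℝ) (f : (Fin n → Bool) → ℝ) : (Fin n → Bool) → ℝ :=
  fun x => ∑ S : Finset (Fin n), ρ ^ S.card * coeff p f S * chi p S x

/-- The degree-`r` truncation `f^{≤ r}`. -/
noncomputable def trunc (p : ℝ) (r : ℕ) (f : (Fin n → Bool) → ℝ) : (Fin n → Bool) → ℝ :=
  fun x => ∑ S ∈ Finset.univ.filter (fun S : Finset (Fin n) => S.card ≤ r),
    coeff p f S * chi p S x

/-- The restriction `f_{J→1}` setting all coordinates in `J` to `1`. -/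
def restrict1 (J : Finset (Fin n)) (f : (Fin n → Bool) → ℝ) : (Fin n → Bool) → ℝ :=
  fun x => f (fun i => if i ∈ J then true else x i)

/-- `f` is `(r,δ)`-global (for the `p`-biased measure). -/
def IsGlobal (p r δ : ℝ) (f : (Fin n → Bool) → ℝ) : Prop :=
  ∀ J : Finset (Fin n), (J.card : ℝ) ≤ r → Ep p (restrict1 J f) ≤ Ep p f + δ

/-- The total influence `I[f] = Σ_i Pr_{μ_p}[f(x ⊕ e_i) ≠ f(x)]`. -/
noncomputable def totalInf (p : ℝ) (f : (Fin n → Bool) → ℝ) : ℝ :=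
  ∑ i : Fin n, Ep p fun x => if f (Function.update x i (!x i)) = f x then 0 else 1

/-- Noise stability `Stab_ρ(f) = Σ_S ρ^{|S|} f̂(S)²` (w.r.t. `μ_p`). -/
noncomputable def stab (p ρ : ℝ) (f : (Fin n → Bool) → ℝ) : ℝ :=
  ∑ S : Finset (Fin n), ρ ^ S.card * coeff p f S ^ 2

/-- `f` is monotone. -/
def Mono (f : (Fin n → Bool) → ℝ) : Prop :=
  ∀ x y : Fin n → Bool, (∀ i, x i ≤ y i) → f x ≤ f y



/-- The single-coordinate weight. -/
lemma Ep_coord (p : ℝ) (i : Fin n) (K : Bool → (Fin n → Bool) → ℝ)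
    (hK : ∀ b c x, K b (Function.update x i c) = K b x) :
    Ep p (fun x => K (x i) x) = Ep p (fun x => p * K true x + (1 - p) * K false x) := by
  classical
  let e : (Fin n → Bool) ≃ (Fin n → Bool) :=
    { toFun := fun x => Function.update x i (!x i)
      invFun := fun x => Function.update x i (!x i)
      left_inv := by intro x; simp
      right_inv := by intro x; simp }
  let R : (Fin n → Bool) → ℝ := fun x => ∏ j ∈ univ.erase i, if x j then p else 1 - p
  have hw : ∀ x : Fin n → Bool, (∏ j, if x j then p else 1 - p) =
      (if x i then p else 1 - p) * R x := fun x =>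
    (Finset.mul_prod_erase univ (fun j => if x j then p else 1 - p) (mem_univ i)).symm
  have hR : ∀ x, R (e x) = R x := by
    intro x
    refine Finset.prod_congr rfl fun j hj => ?_
    have : j ≠ i := (Finset.mem_erase.mp hj).1
    simp [e, Function.update_of_ne this]
  have key : ∀ H : (Fin n → Bool) → ℝ, 2 * Ep p H =
      ∑ x, R x * ((if x i then p else 1 - p) * H x + (if x i then 1 - p else p) * H (e x)) := by
    intro H
    have h1 : Ep p H = ∑ x, R x * ((if x i then p else 1 - p) * H x) := by
      unfold Ep
      refine Finset.sum_congr rfl fun x _ => ?_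
      rw [hw]; ring
    have h2 : Ep p H = ∑ x, R x * ((if x i then 1 - p else p) * H (e x)) := by
      rw [h1, ← e.sum_comp]
      refine Finset.sum_congr rfl fun x _ => ?_
      rw [hR]
      cases h : x i <;> simp [e, h]
    rw [two_mul]; nth_rewrite 1 [h1]; rw [h2, ← Finset.sum_add_distrib]
    refine Finset.sum_congr rfl fun x _ => ?_
    ring
  have h2 : 2 * Ep p (fun x => K (x i) x) =
      2 * Ep p (fun x => p * K true x + (1 - p) * K false x) := by
    rw [key, key]
    refine Finset.sum_congr rfl fun x _ => ?_
    cases h : x i <;> simp [e, h, hK] <;> left <;> ring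
  linarith

lemma Ep_mono (p : ℝ) (hp : 0 < p) (hp' : p ≤ 1/2) {F G : (Fin n → Bool) → ℝ}
    (h : ∀ x, F x ≤ G x) : Ep p F ≤ Ep p G := by
  unfold Ep
  refine Finset.sum_le_sum fun x _ => mul_le_mul_of_nonneg_left (h x) ?_
  refine Finset.prod_nonneg fun i _ => ?_
  split_ifs <;> linarith

lemma Ep_add (p : ℝ) (F G : (Fin n → Bool) → ℝ) :
    Ep p (fun x => F x + G x) = Ep p F + Ep p G := by
  simp [Ep, mul_add, Finset.sum_add_distrib]

lemma Ep_mul (p c : ℝ) (F : (Fin n → Bool) → ℝ) :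
    Ep p (fun x => c * F x) = c * Ep p F := by
  simp only [Ep, Finset.mul_sum]
  refine Finset.sum_congr rfl fun x _ => ?_
  ring

lemma Ep_sum {ι : Type*} (p : ℝ) (s : Finset ι) (F : ι → (Fin n → Bool) → ℝ) :
    Ep p (fun x => ∑ k ∈ s, F k x) = ∑ k ∈ s, Ep p (F k) := by
  simp only [Ep, Finset.mul_sum]
  rw [Finset.sum_comm]

lemma Ep_one (p : ℝ) : Ep p (fun _ : Fin n → Bool => (1 : ℝ)) = 1 := by
  have := Finset.prod_univ_sum (fun _ : Fin n => (univ : Finset Bool))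
    (fun _ b => if b then p else 1 - p)
  rw [Fintype.piFinset_univ] at this
  simp only [Ep, mul_one]
  rw [← this]
  simp

lemma Ep_cs (p : ℝ) (hp : 0 < p) (hp' : p ≤ 1/2) (F G : (Fin n → Bool) → ℝ) :
    Ep p (fun x => F x * G x) ^ 2 ≤ Ep p (fun x => F x ^ 2) * Ep p (fun x => G x ^ 2) := by
  unfold Ep
  refine Finset.sum_sq_le_sum_mul_sum_of_sq_le_mul _ ?_ ?_ ?_
  all_goals intro x _
  all_goals
    have hw : 0 ≤ (∏ i, if x i then p else 1 - p) :=
      Finset.prod_nonneg fun i _ => by split_ifs <;> linarith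
  · positivity
  · positivity
  · apply le_of_eq; ring

/-- single character value -/
noncomputable def ch (p : ℝ) (b : Bool) : ℝ :=
  ((if b then (1 : ℝ) else 0) - p) / Real.sqrt (p * (1 - p))

lemma chi_insert (p : ℝ) {i : Fin n} {S : Finset (Fin n)} (h : i ∉ S) (x : Fin n → Bool) :
    chi p (insert i S) x = ch p (x i) * chi p S x := by
  simp [chi, ch, Finset.prod_insert h]

lemma chi_update (p : ℝ) {i : Fin n} {S : Finset (Fin n)} (h : i ∉ S) (x : Fin n → Bool)
    (c : Bool) : chi p S (Function.update x i c) = chi p S x := by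
  unfold chi
  refine Finset.prod_congr rfl fun j hj => ?_
  have : j ≠ i := fun e => h (e ▸ hj)
  rw [Function.update_of_ne this]

lemma ch_mean (p : ℝ) : p * ch p true + (1 - p) * ch p false = 0 := by
  simp [ch]; ring

lemma ch_sq (p : ℝ) (hp : 0 < p) (hp' : p ≤ 1/2) :
    p * ch p true ^ 2 + (1 - p) * ch p false ^ 2 = 1 := by
  have h1 : 0 < 1 - p := by linarith
  have h : 0 < p * (1 - p) := mul_pos hp h1
  simp only [ch, div_pow, Real.sq_sqrt h.le]
  simp
  field_simp
  ring

lemma chi_sq (p : ℝ) (hp : 0 < p) (hp' : p ≤ 1/2) (S : Finset (Fin n)) :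
    Ep p (fun x => chi p S x * chi p S x) = 1 := by
  classical
  induction S using Finset.induction_on with
  | empty => simpa [chi] using Ep_one p
  | insert i S hi ih =>
    simp only [chi_insert p hi]
    rw [Ep_coord p i (fun b x => ch p b * chi p S x * (ch p b * chi p S x))
      (by intro b c x; simp only [chi_update p hi])]
    refine Eq.trans ?_ ih
    congr 1; funext x
    linear_combination (chi p S x * chi p S x) * ch_sq p hp hp'

lemma chi_orth_aux (p : ℝ) {S T : Finset (Fin n)} {i : Fin n}
    (hi : i ∈ S) (hT : i ∉ T) : Ep p (fun x => chi p S x * chi p T x) = 0 := by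
  classical
  have hS : i ∉ S.erase i := Finset.notMem_erase i S
  have e : S = insert i (S.erase i) := (Finset.insert_erase hi).symm
  rw [e]
  simp only [chi_insert p hS]
  rw [Ep_coord p i (fun b x => ch p b * chi p (S.erase i) x * chi p T x)
      (by intro b c x; simp only [chi_update p hS, chi_update p hT])]
  have : (fun x : Fin n → Bool => p * (ch p true * chi p (S.erase i) x * chi p T x) +
      (1 - p) * (ch p false * chi p (S.erase i) x * chi p T x)) = fun x => (0:ℝ) * 1 := by
    funext x
    linear_combination (chi p (S.erase i) x * chi p T x) * ch_mean p
  rw [this, Ep_mul]; simp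

lemma chi_orth (p : ℝ) (hp : 0 < p) (hp' : p ≤ 1/2) (S T : Finset (Fin n)) :
    Ep p (fun x => chi p S x * chi p T x) = if S = T then 1 else 0 := by
  classical
  split_ifs with h
  · subst h; exact chi_sq p hp hp' S
  · by_cases hs : S ⊆ T
    · have : ¬ T ⊆ S := fun h' => h (Finset.Subset.antisymm hs h')
      obtain ⟨i, h1, h2⟩ := Finset.not_subset.mp this
      have := chi_orth_aux p h1 h2
      simpa only [mul_comm] using this
    · obtain ⟨i, h1, h2⟩ := Finset.not_subset.mp hs
      exact chi_orth_aux p h1 h2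

/-- one-variable inequality -/
lemma one_var (p : ℝ) (hp : 0 < p) (hp' : p ≤ 1/2) (A B C D : ℝ) :
    p * ((A + ch p true * B) ^ 2 * (C + ch p true * D) ^ 2) +
      (1 - p) * ((A + ch p false * B) ^ 2 * (C + ch p false * D) ^ 2) ≤
    A ^ 2 * C ^ 2 + 4 * (A ^ 2 * D ^ 2) + 4 * (B ^ 2 * C ^ 2)
      + 3 / (p * (1 - p)) * (B ^ 2 * D ^ 2) := by
  have h1 : 0 < 1 - p := by linarith
  have h : 0 < p * (1 - p) := mul_pos hp h1
  set s := Real.sqrt (p * (1 - p)) with hs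
  have hs0 : 0 < s := Real.sqrt_pos.mpr h
  have hs2 : s ^ 2 = p * (1 - p) := Real.sq_sqrt h.le
  have m1 := ch_mean p
  have m2 := ch_sq p hp hp'
  have m3 : p * ch p true ^ 3 + (1 - p) * ch p false ^ 3 = (1 - 2 * p) * s⁻¹ := by
    simp only [ch, ← hs]
    simp
    field_simp
    linear_combination (-(1 - 2 * p)) * hs2
  have m4 : p * ch p true ^ 4 + (1 - p) * ch p false ^ 4 = s⁻¹ ^ 2 - 3 := by
    simp only [ch, ← hs]
    simp
    field_simp
    linear_combination (-(1 - 3 * s ^ 2) + 3 * p * (1 - p)) * hs2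
  have e : 3 / (p * (1 - p)) = 3 * s⁻¹ ^ 2 := by rw [← hs2]; field_simp
  rw [e]
  set u := s⁻¹ with hu
  set a := ch p true
  set b := ch p false
  have expand : p * ((A + a * B) ^ 2 * (C + a * D) ^ 2) +
      (1 - p) * ((A + b * B) ^ 2 * (C + b * D) ^ 2) =
      A ^ 2 * C ^ 2 + (A ^ 2 * D ^ 2 + B ^ 2 * C ^ 2 + 4 * A * B * C * D)
      + ((1 - 2 * p) * u) * (2 * A * B * D ^ 2 + 2 * B ^ 2 * C * D)
      + (u ^ 2 - 3) * (B ^ 2 * D ^ 2) := by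
    rw [← m3, ← m4]
    linear_combination (2 * A ^ 2 * C * D + 2 * A * B * C ^ 2) * m1 +
      (A ^ 2 * D ^ 2 + B ^ 2 * C ^ 2 + 4 * A * B * C * D) * m2
  rw [expand]
  have q1 := sq_nonneg (A * D - B * C)
  have q2 := sq_nonneg (A * D - (1 - 2 * p) * u * B * D)
  have q3 := sq_nonneg (B * C - (1 - 2 * p) * u * B * D)
  have q4 : (1 - 2 * p) ^ 2 * (u * B * D) ^ 2 ≤ 1 * (u * B * D) ^ 2 :=
    mul_le_mul_of_nonneg_right (by nlinarith) (sq_nonneg _)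
  have q5 := sq_nonneg (B * D)
  nlinarith

/-- weighted square sums -/
noncomputable def NS (U S : Finset (Fin n)) (a : Finset (Fin n) → ℝ) : ℝ :=
  ∑ T ∈ U.powerset, if S ⊆ T then 4 ^ (T \ S).card * a T ^ 2 else 0

/-- polynomial supported on `U` -/
noncomputable def poly (p : ℝ) (U : Finset (Fin n)) (a : Finset (Fin n) → ℝ)
    (x : Fin n → Bool) : ℝ := ∑ T ∈ U.powerset, a T * chi p T x

lemma poly_insert (p : ℝ) {i : Fin n} {U : Finset (Fin n)} (hi : i ∉ U)
    (a : Finset (Fin n) → ℝ) (x : Fin n → Bool) :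
    poly p (insert i U) a x = poly p U a x + ch p (x i) * poly p U (fun T => a (insert i T)) x := by
  unfold poly
  rw [Finset.sum_powerset_insert hi, Finset.mul_sum]
  congr 1
  refine Finset.sum_congr rfl fun T hT => ?_
  have : i ∉ T := fun h => hi (Finset.mem_powerset.mp hT h)
  rw [chi_insert p this]; ring

lemma poly_update (p : ℝ) {i : Fin n} {U : Finset (Fin n)} (hi : i ∉ U)
    (a : Finset (Fin n) → ℝ) (x : Fin n → Bool) (c : Bool) :
    poly p U a (Function.update x i c) = poly p U a x := by
  unfold poly
  refine Finset.sum_congr rfl fun T hT => ?_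
  have : i ∉ T := fun h => hi (Finset.mem_powerset.mp hT h)
  rw [chi_update p this]

lemma NS_nonneg (U S : Finset (Fin n)) (a : Finset (Fin n) → ℝ) : 0 ≤ NS U S a := by
  unfold NS
  refine Finset.sum_nonneg fun T _ => ?_
  split_ifs <;> positivity

lemma NS_insert1 {i : Fin n} {U S : Finset (Fin n)} (hi : i ∉ U) (hS : i ∉ S)
    (a : Finset (Fin n) → ℝ) :
    NS (insert i U) S a = NS U S a + 4 * NS U S (fun T => a (insert i T)) := by
  unfold NS
  rw [Finset.sum_powerset_insert hi, Finset.mul_sum]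
  congr 1
  refine Finset.sum_congr rfl fun T hT => ?_
  have hT' : i ∉ T := fun h => hi (Finset.mem_powerset.mp hT h)
  have e1 : S ⊆ insert i T ↔ S ⊆ T := Finset.subset_insert_iff_of_notMem hS
  have e2 : (insert i T) \ S = insert i (T \ S) := Finset.insert_sdiff_of_notMem _ hS
  have e3 : i ∉ T \ S := fun h => hT' (Finset.mem_sdiff.mp h).1
  simp only [e1, e2, Finset.card_insert_of_notMem e3]
  split_ifs
  · ring
  · ring

lemma NS_insert2 {i : Fin n} {U S : Finset (Fin n)} (hi : i ∉ U) (hS : i ∉ S)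
    (a : Finset (Fin n) → ℝ) :
    NS (insert i U) (insert i S) a = NS U S (fun T => a (insert i T)) := by
  unfold NS
  rw [Finset.sum_powerset_insert hi]
  rw [Finset.sum_eq_zero, zero_add]
  · refine Finset.sum_congr rfl fun T hT => ?_
    have hT' : i ∉ T := fun h => hi (Finset.mem_powerset.mp hT h)
    have e1 : insert i S ⊆ insert i T ↔ S ⊆ T := Finset.insert_subset_insert_iff hS
    have e2 : (insert i T) \ (insert i S) = T \ S := by
      ext j; simp only [Finset.mem_sdiff, Finset.mem_insert]
      by_cases h : j = i
      · subst h; simp [hT']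
      · simp [h]
    simp only [e1, e2]
  · intro T hT
    have hT' : i ∉ T := fun h => hi (Finset.mem_powerset.mp hT h)
    rw [if_neg]
    exact fun h => hT' (h (Finset.mem_insert_self _ _))

lemma hyper (p : ℝ) (hp : 0 < p) (hp' : p ≤ 1/2) (U : Finset (Fin n)) :
    ∀ a b : Finset (Fin n) → ℝ, Ep p (fun x => poly p U a x ^ 2 * poly p U b x ^ 2) ≤
      ∑ S ∈ U.powerset, (3 / (p * (1 - p))) ^ S.card * (NS U S a * NS U S b) := by
  classical
  induction U using Finset.induction_on with
  | empty =>
    intro a b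
    have := Ep_mul p (a ∅ ^ 2 * b ∅ ^ 2) (fun _ : Fin n → Bool => (1:ℝ))
    rw [Ep_one] at this
    simp only [mul_one] at this
    simp [poly, NS, chi, this]
  | insert i U hi ih =>
    intro a b
    set w := 3 / (p * (1 - p)) with hw
    have hw0 : 0 ≤ w := by
      have h1 : 0 < 1 - p := by linarith
      positivity
    set a' : Finset (Fin n) → ℝ := fun T => a (insert i T) with ha'
    set b' : Finset (Fin n) → ℝ := fun T => b (insert i T) with hb'
    simp only [poly_insert p hi]
    rw [Ep_coord p i (fun c x => (poly p U a x + ch p c * poly p U a' x) ^ 2 *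
      (poly p U b x + ch p c * poly p U b' x) ^ 2)
      (by intro c d x; simp only [poly_update p hi])]
    refine (Ep_mono p hp hp' fun x => one_var p hp hp' _ _ _ _).trans ?_
    rw [Ep_add, Ep_add, Ep_add, Ep_mul, Ep_mul, Ep_mul]
    have i1 := ih a b
    have i2 := ih a b'
    have i3 := ih a' b
    have i4 := mul_le_mul_of_nonneg_left (ih a' b') hw0
    rw [Finset.sum_powerset_insert hi]
    have g1 : ∑ S ∈ U.powerset, w ^ (insert i S).card *
        (NS (insert i U) (insert i S) a * NS (insert i U) (insert i S) b) =
        w * ∑ S ∈ U.powerset, w ^ S.card * (NS U S a' * NS U S b') := by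
      rw [Finset.mul_sum]
      refine Finset.sum_congr rfl fun S hS => ?_
      have hS' : i ∉ S := fun h => hi (Finset.mem_powerset.mp hS h)
      rw [NS_insert2 hi hS', NS_insert2 hi hS', Finset.card_insert_of_notMem hS']
      ring
    have g2 : ∑ S ∈ U.powerset, w ^ S.card * (NS U S a * NS U S b) +
        4 * ∑ S ∈ U.powerset, w ^ S.card * (NS U S a * NS U S b') +
        4 * ∑ S ∈ U.powerset, w ^ S.card * (NS U S a' * NS U S b) ≤
        ∑ S ∈ U.powerset, w ^ S.card * (NS (insert i U) S a * NS (insert i U) S b) := by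
      rw [Finset.mul_sum, Finset.mul_sum, ← Finset.sum_add_distrib, ← Finset.sum_add_distrib]
      refine Finset.sum_le_sum fun S hS => ?_
      have hS' : i ∉ S := fun h => hi (Finset.mem_powerset.mp hS h)
      rw [NS_insert1 hi hS', NS_insert1 hi hS']
      have n1 := NS_nonneg U S a'
      have n2 := NS_nonneg U S b'
      have n3 : 0 ≤ w ^ S.card * (NS U S a' * NS U S b') := by positivity
      simp only [← ha', ← hb']
      nlinarith
    rw [g1]
    linarith

/-- Truncated coefficient sequence. -/
noncomputable def tc (p : ℝ) (r : ℕ) (f : (Fin n → Bool) → ℝ) (S : Finset (Fin n)) : ℝ :=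
  if S.card ≤ r then coeff p f S else 0

lemma trunc_eq (p : ℝ) (r : ℕ) (f : (Fin n → Bool) → ℝ) (x : Fin n → Bool) :
    trunc p r f x = ∑ S : Finset (Fin n), tc p r f S * chi p S x := by
  unfold trunc tc
  rw [Finset.sum_filter]
  refine Finset.sum_congr rfl fun S _ => ?_
  split_ifs <;> simp

lemma trunc_poly (p : ℝ) (r : ℕ) (f : (Fin n → Bool) → ℝ) (x : Fin n → Bool) :
    trunc p r f x = poly p univ (tc p r f) x := by
  rw [trunc_eq, poly, Finset.powerset_univ]

lemma coeff_trunc (p : ℝ) (hp : 0 < p) (hp' : p ≤ 1/2) (r : ℕ) (f : (Fin n → Bool) → ℝ)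
    (T : Finset (Fin n)) : coeff p (trunc p r f) T = tc p r f T := by
  classical
  unfold coeff
  simp only [trunc_eq, Finset.sum_mul, mul_assoc]
  rw [Ep_sum]
  simp only [Ep_mul, chi_orth p hp hp']
  simp

lemma Ep_mul_trunc (p : ℝ) (r : ℕ) (f g : (Fin n → Bool) → ℝ) :
    Ep p (fun x => g x * trunc p r f x) = ∑ S, tc p r f S * coeff p g S := by
  have : ∀ x, g x * trunc p r f x = ∑ S, tc p r f S * (g x * chi p S x) := by
    intro x
    rw [trunc_eq, Finset.mul_sum]
    refine Finset.sum_congr rfl fun S _ => ?_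
    ring
  simp only [this]
  rw [Ep_sum]
  simp only [Ep_mul]
  rfl

lemma NS_le (p : ℝ) (r : ℕ) (f : (Fin n → Bool) → ℝ) (S : Finset (Fin n)) :
    NS univ S (tc p r f) ≤ 4 ^ r * ∑ T, if S ⊆ T then tc p r f T ^ 2 else 0 := by
  unfold NS
  rw [Finset.powerset_univ, Finset.mul_sum]
  refine Finset.sum_le_sum fun T _ => ?_
  split_ifs with h
  · by_cases hT : T.card ≤ r
    · refine mul_le_mul_of_nonneg_right ?_ (sq_nonneg _)
      exact pow_le_pow_right₀ (by norm_num) ((Finset.card_le_card Finset.sdiff_subset).trans hT)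
    · simp [tc, hT]
  · simp

lemma four_norm (p δ : ℝ) (r : ℕ) (hp : 0 < p) (hp' : p ≤ 1/2)
    (f : (Fin n → Bool) → ℝ)
    (hinf : ∀ S : Finset (Fin n), S.card ≤ r → genInf p S (trunc p r f) ≤ δ) (hδ : 0 < δ) :
    Ep p (fun x => trunc p r f x ^ 2 * trunc p r f x ^ 2) ≤
      64 ^ r * δ * ∑ T, tc p r f T ^ 2 := by
  classical
  have h1 : 0 < 1 - p := by linarith
  have hq : 0 < p * (1 - p) := mul_pos hp h1
  set W : Finset (Fin n) → ℝ := fun S => ∑ T, if S ⊆ T then tc p r f T ^ 2 else 0 with hW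
  have W0 : ∀ S, 0 ≤ W S := fun S => Finset.sum_nonneg fun T _ => by
    split_ifs <;> positivity
  have hWS : ∀ S, W S ≤ δ * (p * (1 - p)) ^ S.card := by
    intro S
    by_cases hS : S.card ≤ r
    · have := hinf S hS
      unfold genInf at this
      rw [div_le_iff₀ (pow_pos hq _), Finset.sum_filter] at this
      simpa only [coeff_trunc p hp hp'] using this
    · have : W S = 0 := by
        refine Finset.sum_eq_zero fun T _ => ?_
        split_ifs with h
        · have := Finset.card_le_card h
          have : ¬ T.card ≤ r := by omega
          simp [tc, this]
        · rfl
      rw [this]; positivity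
  simp only [trunc_poly]
  refine (hyper p hp hp' univ _ _).trans ?_
  rw [Finset.powerset_univ]
  calc _ ≤ ∑ S : Finset (Fin n), 16 ^ r * δ * (3 ^ S.card * W S) := by
        refine Finset.sum_le_sum fun S _ => ?_
        have a1 := NS_le p r f S
        have a0 := NS_nonneg univ S (tc p r f)
        have a2 : NS univ S (tc p r f) * NS univ S (tc p r f) ≤ (4 ^ r * W S) * (4 ^ r * W S) :=
          mul_le_mul a1 a1 a0 (a0.trans a1)
        have a3 : W S * W S ≤ δ * (p * (1 - p)) ^ S.card * W S :=
          mul_le_mul_of_nonneg_right (hWS S) (W0 S)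
        have e16 : (16:ℝ) ^ r = 4 ^ r * 4 ^ r := by rw [← mul_pow]; norm_num
        calc _ ≤ (3 / (p * (1 - p))) ^ S.card * ((4 ^ r * W S) * (4 ^ r * W S)) := by
              refine mul_le_mul_of_nonneg_left a2 (by positivity)
          _ = (3 / (p * (1 - p))) ^ S.card * 16 ^ r * (W S * W S) := by rw [e16]; ring
          _ ≤ (3 / (p * (1 - p))) ^ S.card * 16 ^ r * (δ * (p * (1 - p)) ^ S.card * W S) :=
              mul_le_mul_of_nonneg_left a3 (by positivity)
          _ = _ := by
              rw [div_pow]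
              have := pow_pos hq S.card
              generalize (p * (1 - p)) ^ S.card = z at *
              field_simp
    _ = 16 ^ r * δ * ∑ T : Finset (Fin n), 4 ^ T.card * tc p r f T ^ 2 := by
        rw [← Finset.mul_sum]
        congr 1
        simp only [hW, Finset.mul_sum]
        rw [Finset.sum_comm]
        refine Finset.sum_congr rfl fun T _ => ?_
        have h4 := Finset.sum_pow_mul_eq_add_pow (3:ℝ) 1 T
        simp only [one_pow, mul_one] at h4
        have h5 : (4:ℝ) ^ T.card = ∑ S : Finset (Fin n), if S ⊆ T then 3 ^ S.card else 0 := by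
          rw [← Finset.sum_filter]
          have : (univ.filter fun S => S ⊆ T) = T.powerset := by ext; simp
          rw [this, h4]; norm_num
        rw [h5, Finset.sum_mul]
        refine Finset.sum_congr rfl fun S _ => ?_
        split_ifs <;> simp
    _ ≤ 16 ^ r * δ * ∑ T : Finset (Fin n), 4 ^ r * tc p r f T ^ 2 := by
        refine mul_le_mul_of_nonneg_left (Finset.sum_le_sum fun T _ => ?_) (by positivity)
        by_cases hT : T.card ≤ r
        · exact mul_le_mul_of_nonneg_right (pow_le_pow_right₀ (by norm_num) hT) (sq_nonneg _)
        · simp [tc, hT]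
    _ = _ := by
        rw [← Finset.mul_sum]
        have : (64:ℝ) ^ r = 16 ^ r * 4 ^ r := by rw [← mul_pow]; norm_num
        rw [this]; ring

/-- low-degree concentration for `{−1,0,1}`-valued functions with small
generalised influences. -/
theorem statement8 {n : ℕ} (p δ : ℝ) (r : ℕ) (hp : 0 < p) (hp' : p ≤ 1/2)
    (hr : 1 ≤ r) (hδ : 0 < δ)
    (f : (Fin n → Bool) → ℝ) (hval : ∀ x, f x = -1 ∨ f x = 0 ∨ f x = 1)
    (hinf : ∀ S : Finset (Fin n), S.card ≤ r → genInf p S (trunc p r f) ≤ δ) :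
    Ep p (fun x => trunc p r f x ^ 2) ≤
      (5 : ℝ) ^ r * δ ^ ((1 : ℝ)/3) * Ep p (fun x => f x ^ 2) := by
  set g := trunc p r f with hg
  set A := Ep p (fun x => g x ^ 2) with hA
  set F := Ep p (fun x => f x ^ 2) with hF
  have hzero : Ep p (fun _ : Fin n → Bool => (0:ℝ)) = 0 := by simp [Ep]
  have hA0 : 0 ≤ A := by
    rw [← hzero]; exact Ep_mono p hp hp' fun x => sq_nonneg _
  have hF0 : 0 ≤ F := by
    rw [← hzero]; exact Ep_mono p hp hp' fun x => sq_nonneg _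
  have hAs : A = ∑ T, tc p r f T ^ 2 := by
    have := Ep_mul_trunc p r f g
    simp only [← hg] at this
    rw [hA]
    simp only [sq]
    rw [this]
    refine Finset.sum_congr rfl fun S _ => ?_
    rw [hg, coeff_trunc p hp hp']
  have hfg : Ep p (fun x => f x * (f x ^ 2 * g x)) = A := by
    have := Ep_mul_trunc p r f f
    simp only [← hg] at this
    rw [hAs]
    have e : ∀ x, f x * (f x ^ 2 * g x) = f x * g x := by
      intro x; rcases hval x with h | h | h <;> rw [h] <;> ring
    simp only [e]
    rw [this]
    refine Finset.sum_congr rfl fun S _ => ?_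
    unfold tc; split_ifs <;> ring
  have c1 : A ^ 2 ≤ F * Ep p (fun x => f x ^ 2 * g x ^ 2) := by
    have := Ep_cs p hp hp' f (fun x => f x ^ 2 * g x)
    rw [hfg] at this
    have e : ∀ x, (f x ^ 2 * g x) ^ 2 = f x ^ 2 * g x ^ 2 := by
      intro x; rcases hval x with h | h | h <;> rw [h] <;> ring
    simpa only [e] using this
  have c2 : Ep p (fun x => f x ^ 2 * g x ^ 2) ^ 2 ≤ F * (64 ^ r * δ * A) := by
    have := Ep_cs p hp hp' (fun x => f x ^ 2) (fun x => g x ^ 2)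
    have e : ∀ x, (f x ^ 2) ^ 2 = f x ^ 2 := by
      intro x; rcases hval x with h | h | h <;> rw [h] <;> ring
    simp only [e] at this
    refine this.trans (mul_le_mul_of_nonneg_left ?_ hF0)
    have h4 := four_norm p δ r hp hp' f hinf hδ
    rw [hAs]
    simpa only [← hg, ← sq] using h4
  have c3 : A ^ 4 ≤ F ^ 3 * (64 ^ r * δ * A) := by
    calc A ^ 4 = (A ^ 2) ^ 2 := by ring
      _ ≤ (F * Ep p (fun x => f x ^ 2 * g x ^ 2)) ^ 2 := pow_le_pow_left₀ (sq_nonneg _) c1 2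
      _ = F ^ 2 * Ep p (fun x => f x ^ 2 * g x ^ 2) ^ 2 := by ring
      _ ≤ F ^ 2 * (F * (64 ^ r * δ * A)) := mul_le_mul_of_nonneg_left c2 (sq_nonneg _)
      _ = _ := by ring
  have hd0 : 0 ≤ δ ^ ((1:ℝ)/3) := by positivity
  rcases hA0.eq_or_lt with h | h
  · rw [← h]; positivity
  · have c4 : A ^ 3 ≤ F ^ 3 * (64 ^ r * δ) := by
      refine le_of_mul_le_mul_right ?_ h
      calc A ^ 3 * A = A ^ 4 := by ring
        _ ≤ _ := c3
        _ = _ := by ring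
    have hd3 : (δ ^ ((1:ℝ)/3)) ^ 3 = δ := by
      rw [← Real.rpow_natCast, ← Real.rpow_mul hδ.le]; norm_num
    refine le_of_pow_le_pow_left₀ (n := 3) (by norm_num) (by positivity) (c4.trans ?_)
    have h5 : (64:ℝ) ^ r ≤ (5 ^ r) ^ 3 := by
      rw [← pow_mul, mul_comm, pow_mul]
      exact pow_le_pow_left₀ (by norm_num) (by norm_num) r
    rw [mul_pow, mul_pow, hd3]
    calc F ^ 3 * (64 ^ r * δ) ≤ F ^ 3 * ((5 ^ r) ^ 3 * δ) := by gcongr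
      _ = _ := by ring

end GlobalHC
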